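/- arXiv:1506.07260 — 5 statements merged into one kernel-verified Lean document; each statement's English description precedes it below -/
import Mathlib

section
/- For every finite simple graph G=(V,E) of order n and every minimal dominating set D of G, one has 2|D| ≤ n + |I_D|, where I_D = {v ∈ D : v has no neighbour in D}. -/
/-!
A vertex `v ∈ D` with a neighbour in `D` still dominates itself after leaving `D`, so minimality
forces it to have a private neighbour outside `D`: a vertex `w ∉ D` whose only neighbour in `D`
is `v`. Distinct vertices have distinct private neighbours, so `v ↦ w` injects `D \ I_D` into
`V \ D`, and `|D| - |I_D| ≤ n - |D|`.
-/

/-- `D` is a dominating set of `G`: every vertex is in `D` or has a neighbour in `D`. -/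
def IsDomSet {V : Type*} (G : SimpleGraph V) (D : Finset V) : Prop :=
  ∀ v : V, v ∈ D ∨ ∃ u ∈ D, G.Adj u v

/-- `D` is a minimal dominating set of `G`. -/
def IsMinDomSet {V : Type*} (G : SimpleGraph V) (D : Finset V) : Prop :=
  IsDomSet G D ∧ ∀ D' : Finset V, D' ⊂ D → ¬ IsDomSet G D'

/-- A vertex of a minimal dominating set `D` with a neighbour in `D` has a private neighbour
outside `D`. -/
lemma IsMinDomSet.exists_private {V : Type*} [DecidableEq V] {G : SimpleGraph V} {D : Finset V}
    (hD : IsMinDomSet G D) {v : V} (hv : v ∈ D) (h : ∃ u ∈ D, G.Adj v u) :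
    ∃ w, w ∉ D ∧ G.Adj v w ∧ ∀ u ∈ D, G.Adj u w → u = v := by
  have hnot := hD.2 (D.erase v) (Finset.erase_ssubset hv)
  unfold IsDomSet at hnot
  push Not at hnot
  obtain ⟨w, hw, hnb⟩ := hnot
  have huniq : ∀ u ∈ D, G.Adj u w → u = v := fun u hu ha => by
    by_contra hne
    exact hnb u (Finset.mem_erase.2 ⟨hne, hu⟩) ha
  have hwv : w ≠ v := by
    rintro rfl
    obtain ⟨u, hu, ha⟩ := h
    exact ha.ne' (huniq u hu ha.symm)
  have hwD : w ∉ D := fun hmem => hw (Finset.mem_erase.2 ⟨hwv, hmem⟩)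
  obtain ⟨u, hu, ha⟩ := (hD.1 w).resolve_left hwD
  exact ⟨w, hwD, huniq u hu ha ▸ ha, huniq⟩

theorem stmt1 {V : Type*} [Fintype V] [DecidableEq V] (G : SimpleGraph V)
    [DecidableRel G.Adj] (D : Finset V) (hD : IsMinDomSet G D) :
    2 * D.card ≤ Fintype.card V + (D.filter fun v => ∀ u ∈ D, ¬ G.Adj v u).card := by
  have hpriv : ∀ v ∈ D.filter (fun v => ¬ ∀ u ∈ D, ¬ G.Adj v u),
      ∃ w, w ∉ D ∧ G.Adj v w ∧ ∀ u ∈ D, G.Adj u w → u = v := by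
    intro v hv
    obtain ⟨hvD, h⟩ := Finset.mem_filter.1 hv
    push Not at h
    exact hD.exists_private hvD h
  choose! f hfD hadj huniq using hpriv
  have hle : (D.filter (fun v => ¬ ∀ u ∈ D, ¬ G.Adj v u)).card ≤ Dᶜ.card := by
    refine Finset.card_le_card_of_injOn f (fun v hv => ?_) (fun a ha b hb hab => ?_)
    · exact Finset.mem_compl.2 (hfD v hv)
    · exact huniq b hb a (Finset.mem_filter.1 ha).1 (hab ▸ hadj a ha)
  have hsplit := Finset.card_filter_add_card_filter_not (s := D) (fun v => ∀ u ∈ D, ¬ G.Adj v u)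
  have hcompl := Finset.card_add_card_compl D
  omega
end

section
/- Let G=(V,E) be a connected finite simple graph with n>0 vertices and let D be a minimal dominating set of G with |D| = Γ(G). If Γ(G) > α(G), then |I_D| ≤ α(G) − 2, where I_D = {v ∈ D : v has no neighbour in D}. -/
/-- `I` is an independent set of `G`. -/
def IsIndepFinset {V : Type*} (G : SimpleGraph V) (I : Finset V) : Prop :=
  ∀ u ∈ I, ∀ v ∈ I, ¬ G.Adj u v

/-- The independence number `α(G)`: maximum cardinality of an independent set. -/
noncomputable def alphaNum {V : Type*} [Fintype V] (G : SimpleGraph V) : ℕ :=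
  sSup {n : ℕ | ∃ I : Finset V, IsIndepFinset G I ∧ I.card = n}

/-- The upper domination number `Γ(G)`: maximum cardinality of a minimal dominating set. -/
noncomputable def upperDomNum {V : Type*} [Fintype V] (G : SimpleGraph V) : ℕ :=
  sSup {n : ℕ | ∃ D : Finset V, IsMinDomSet G D ∧ D.card = n}

theorem IsIndepFinset.card_le_alphaNum {V : Type*} [Fintype V] {G : SimpleGraph V} {I : Finset V}
    (hI : IsIndepFinset G I) : I.card ≤ alphaNum G := by
  refine le_csSup ⟨Fintype.card V, ?_⟩ ⟨I, hI, rfl⟩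
  rintro n ⟨J, -, rfl⟩
  exact J.card_le_univ

theorem stmt3 {V : Type*} [Fintype V] [DecidableEq V] (G : SimpleGraph V)
    [DecidableRel G.Adj] (hconn : G.Connected) (hn : 0 < Fintype.card V)
    (D : Finset V) (hD : IsMinDomSet G D) (hcard : D.card = upperDomNum G)
    (h : alphaNum G < upperDomNum G) :
    (D.filter fun v => ∀ u ∈ D, ¬ G.Adj v u).card + 2 ≤ alphaNum G := by
  obtain ⟨v, hv, u, hu, hvu⟩ : ∃ v ∈ D, ∃ u ∈ D, G.Adj v u := by
    by_contra! hind
    have : D.card ≤ alphaNum G := IsIndepFinset.card_le_alphaNum hind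
    omega
  -- `w` is a vertex not dominated by `D \ {u}`.
  obtain ⟨w, hw⟩ := not_forall.mp (hD.2 _ (Finset.erase_ssubset hu))
  push Not at hw
  obtain ⟨hw₁, hw₂⟩ := hw
  have hwu : w ≠ u := by
    rintro rfl
    exact hw₂ v (Finset.mem_erase.mpr ⟨hvu.ne, hv⟩) hvu
  have hwD : w ∉ D := fun hwD => hw₁ (Finset.mem_erase.mpr ⟨hwu, hwD⟩)
  have hvw : ¬ G.Adj v w := hw₂ v (Finset.mem_erase.mpr ⟨hvu.ne, hv⟩)
  set I := D.filter fun v => ∀ u ∈ D, ¬ G.Adj v u with hI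
  have hID : ∀ x ∈ I, x ∈ D ∧ ∀ y ∈ D, ¬ G.Adj x y := fun x hx => Finset.mem_filter.mp hx
  have hIw : ∀ x ∈ I, ¬ G.Adj x w := by
    intro x hx
    refine hw₂ x (Finset.mem_erase.mpr ⟨?_, (hID x hx).1⟩)
    rintro rfl
    exact (hID x hx).2 v hv hvu.symm
  have hvI : v ∉ I := fun hx => (hID v hx).2 u hu hvu
  have hwI : w ∉ insert v I := by
    intro hx
    rcases Finset.mem_insert.mp hx with rfl | hx
    · exact hwD hv
    · exact hwD (hID w hx).1
  have hindep : IsIndepFinset G (insert w (insert v I)) := by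
    intro x hx y hy hxy
    simp only [Finset.mem_insert] at hx hy
    rcases hx with rfl | rfl | hx <;> rcases hy with rfl | rfl | hy
    · exact hxy.ne rfl
    · exact hvw hxy.symm
    · exact hIw y hy hxy.symm
    · exact hvw hxy
    · exact hxy.ne rfl
    · exact (hID y hy).2 _ hv hxy.symm
    · exact hIw x hx hxy
    · exact (hID x hx).2 _ hv hxy
    · exact (hID x hx).2 y (hID y hy).1 hxy
  have hle := hindep.card_le_alphaNum
  rw [Finset.card_insert_of_notMem hwI, Finset.card_insert_of_notMem hvI] at hle
  exact hle
end

section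
/- For every connected finite simple graph G with n>0 vertices, α(G) ≤ Γ(G) ≤ max{ α(G), n/2 + α(G)/2 − 1 } (equivalently, 2·Γ(G) ≤ max{ 2·α(G), n + α(G) − 2 }). -/
section

variable {V : Type*}

/-- The cardinalities of finsets with a given property are bounded, so that the suprema defining
`alphaNum` and `upperDomNum` are genuine maxima. -/
lemma bddAbove_card [Fintype V] (P : Finset V → Prop) :
    BddAbove {n : ℕ | ∃ I : Finset V, P I ∧ I.card = n} := by
  refine ⟨Fintype.card V, ?_⟩
  rintro n ⟨I, -, rfl⟩
  exact Finset.card_le_univ I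

lemma IsIndepFinset.card_le [Fintype V] {G : SimpleGraph V} {I : Finset V}
    (hI : IsIndepFinset G I) : I.card ≤ alphaNum G :=
  le_csSup (bddAbove_card _) ⟨I, hI, rfl⟩

lemma exists_indep_card_eq [Fintype V] (G : SimpleGraph V) :
    ∃ I : Finset V, IsIndepFinset G I ∧ I.card = alphaNum G :=
  Nat.sSup_mem (s := {n : ℕ | ∃ I : Finset V, IsIndepFinset G I ∧ I.card = n})
    ⟨0, ∅, by simp [IsIndepFinset], rfl⟩ (bddAbove_card _)

lemma isMinDomSet_of_card_eq [Fintype V] {G : SimpleGraph V} {I : Finset V}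
    (hI : IsIndepFinset G I) (hc : I.card = alphaNum G) : IsMinDomSet G I := by
  classical
  refine ⟨fun v => ?_, fun D' hD' hdom => ?_⟩
  · by_contra! h
    obtain ⟨hv, hu⟩ := h
    have hins : IsIndepFinset G (insert v I) := by
      intro a ha b hb hab
      rcases Finset.mem_insert.1 ha with rfl | haI
      · rcases Finset.mem_insert.1 hb with rfl | hb
        · exact G.irrefl hab
        · exact hu b hb hab.symm
      · rcases Finset.mem_insert.1 hb with rfl | hb
        · exact hu a haI hab
        · exact hI a haI b hb hab
    have := hins.card_le
    rw [Finset.card_insert_of_notMem hv] at this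
    omega
  · obtain ⟨v, hv, hv'⟩ := Finset.exists_of_ssubset hD'
    rcases hdom v with h | ⟨u, hu, huv⟩
    · exact hv' h
    · exact hI u (hD'.1 hu) v hv huv

/-- A vertex of a minimal dominating set `D` that is not isolated in `G[D]` has an external private
neighbour: since the rest of `D` dominates `v` itself, the vertex that loses its domination when
`v` is removed lies outside `D`. -/
lemma exists_private_neighbour {G : SimpleGraph V} {D : Finset V} (hD : IsMinDomSet G D)
    {v : V} (hv : v ∈ D) (hnb : ∃ u ∈ D, G.Adj u v) :
    ∃ w, w ∉ D ∧ ∀ u ∈ D, G.Adj u w ↔ u = v := by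
  classical
  have h := hD.2 _ (Finset.erase_ssubset hv)
  simp only [IsDomSet, not_forall] at h
  obtain ⟨w, hw⟩ := h
  push Not at hw
  obtain ⟨hw, hadj⟩ := hw
  have honly : ∀ u ∈ D, G.Adj u w → u = v := by
    intro u hu huw
    by_contra hne
    exact hadj u (Finset.mem_erase.2 ⟨hne, hu⟩) huw
  have hwD : w ∉ D := by
    intro hwD
    have hwv : w = v := by
      by_contra hne
      exact hw (Finset.mem_erase.2 ⟨hne, hwD⟩)
    subst hwv
    obtain ⟨u, hu, huw⟩ := hnb
    exact huw.ne (honly u hu huw)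
  refine ⟨w, hwD, fun u hu => ⟨honly u hu, ?_⟩⟩
  rintro rfl
  obtain h | ⟨x, hx, hxw⟩ := hD.1 w
  · exact absurd h hwD
  · exact honly x hx hxw ▸ hxw

lemma IsMinDomSet.two_mul_card_le [Fintype V] {G : SimpleGraph V} {D : Finset V}
    (hD : IsMinDomSet G D) :
    2 * D.card ≤ max (2 * alphaNum G) (Fintype.card V + alphaNum G - 2) := by
  classical
  by_cases hind : IsIndepFinset G D
  · exact le_max_of_le_left (Nat.mul_le_mul_left 2 hind.card_le)
  apply le_max_of_le_right
  simp only [IsIndepFinset, not_forall, not_not] at hind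
  obtain ⟨u, hu, v, hv, huv⟩ := hind
  set B := D.filter (fun x => ∃ y ∈ D, G.Adj y x) with hB
  set A := D.filter (fun x => ¬ ∃ y ∈ D, G.Adj y x) with hA
  have hcard : B.card + A.card = D.card := Finset.card_filter_add_card_filter_not _
  have hpriv : ∀ x ∈ B, ∃ w, w ∉ D ∧ ∀ y ∈ D, G.Adj y w ↔ y = x := fun x hx =>
    exists_private_neighbour hD (Finset.mem_filter.1 hx).1 (Finset.mem_filter.1 hx).2
  choose! f hfD hf using hpriv
  have hBD : ∀ x ∈ B, x ∈ D := fun x hx => (Finset.mem_filter.1 hx).1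
  have hinj : Set.InjOn f B := by
    intro x hx y hy hxy
    have h := (hf x hx x (hBD x hx)).2 rfl
    rw [hxy] at h
    exact (hf y hy x (hBD x hx)).1 h
  have hn : D.card + B.card ≤ Fintype.card V := by
    have hdisj : Disjoint D (B.image f) := by
      rw [Finset.disjoint_right]
      intro w hw
      obtain ⟨x, hx, rfl⟩ := Finset.mem_image.1 hw
      exact hfD x hx
    rw [← Finset.card_image_of_injOn hinj, ← Finset.card_union_of_disjoint hdisj]
    exact Finset.card_le_univ _
  have huB : u ∈ B := Finset.mem_filter.2 ⟨hu, v, hv, huv.symm⟩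
  have hA' : ∀ a ∈ A, a ∈ D ∧ ∀ y ∈ D, ¬ G.Adj y a := by
    intro a ha
    have h := Finset.mem_filter.1 ha
    exact ⟨h.1, fun y hy hya => h.2 ⟨y, hy, hya⟩⟩
  have hvA : v ∉ A := fun h => (hA' v h).2 u hu huv
  have huA : u ∉ A := fun h => (hA' u h).2 v hv huv.symm
  have hfv : ¬ G.Adj v (f u) := fun h => huv.ne ((hf u huB v hv).1 h).symm
  have hfA : ∀ a ∈ A, ¬ G.Adj a (f u) := by
    intro a ha h
    exact huA ((hf u huB a (hA' a ha).1).1 h ▸ ha)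
  have hins : f u ∉ insert v A := by
    intro h
    rcases Finset.mem_insert.1 h with h | h
    · exact hfD u huB (h ▸ hv)
    · exact hfD u huB (hA' _ h).1
  have hindep : IsIndepFinset G (insert (f u) (insert v A)) := by
    intro a ha b hb hab
    simp only [Finset.mem_insert] at ha hb
    rcases ha with rfl | rfl | ha <;> rcases hb with rfl | rfl | hb
    · exact G.irrefl hab
    · exact hfv hab.symm
    · exact hfA b hb hab.symm
    · exact hfv hab
    · exact G.irrefl hab
    · exact (hA' b hb).2 _ hv hab
    · exact hfA a ha hab
    · exact (hA' a ha).2 _ hv hab.symm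
    · exact (hA' b hb).2 a (hA' a ha).1 hab
  have hα := hindep.card_le
  rw [Finset.card_insert_of_notMem hins, Finset.card_insert_of_notMem hvA] at hα
  omega

end

theorem stmt4 {V : Type*} [Fintype V] (G : SimpleGraph V)
    (hconn : G.Connected) (hn : 0 < Fintype.card V) :
    alphaNum G ≤ upperDomNum G ∧
    2 * upperDomNum G ≤ max (2 * alphaNum G) (Fintype.card V + alphaNum G - 2) := by
  obtain ⟨I, hI, hIc⟩ := exists_indep_card_eq G
  have hImin := isMinDomSet_of_card_eq hI hIc
  refine ⟨hIc ▸ le_csSup (bddAbove_card _) ⟨I, hImin, rfl⟩, ?_⟩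
  obtain ⟨D, hD, hDc⟩ : ∃ D : Finset V, IsMinDomSet G D ∧ D.card = upperDomNum G :=
    Nat.sSup_mem (s := {n : ℕ | ∃ D : Finset V, IsMinDomSet G D ∧ D.card = n})
      ⟨_, I, hImin, rfl⟩ (bddAbove_card _)
  exact hDc ▸ hD.two_mul_card_le
end

section
/- Let ℓ ≥ 1 be an integer and let G=(V,E) be a finite simple graph of order n with no isolated vertices and maximum degree at most ℓ. If G has a minimal dominating set D with |D| ≥ n − ℓ, then n ≤ ℓ² + ℓ. -/
/-- A non-isolated vertex `v` of a minimal dominating set `D` has a neighbour outside `D`: if all its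
neighbours were in `D`, then `v` could be removed, since it would be dominated by any of them and
would dominate nothing outside `D`. -/
theorem IsMinDomSet.exists_adj_notMem {V : Type*} {G : SimpleGraph V} {D : Finset V}
    (hD : IsMinDomSet G D) {v w : V} (hv : v ∈ D) (hvw : G.Adj v w) :
    ∃ u, u ∉ D ∧ G.Adj u v := by
  classical
  by_contra! hno
  refine hD.2 (D.erase v) (Finset.erase_ssubset hv) fun x => ?_
  by_cases hxv : x = v
  · subst hxv
    have hw : w ∈ D := by
      by_contra hw
      exact hno w hw hvw.symm
    exact Or.inr ⟨w, Finset.mem_erase.2 ⟨hvw.ne', hw⟩, hvw.symm⟩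
  · by_cases hx : x ∈ D
    · exact Or.inl (Finset.mem_erase.2 ⟨hxv, hx⟩)
    · obtain h | ⟨u, hu, hux⟩ := hD.1 x
      · exact absurd h hx
      · refine Or.inr ⟨u, Finset.mem_erase.2 ⟨?_, hu⟩, hux⟩
        rintro rfl
        exact hno x hx hux.symm

theorem stmt10 {V : Type*} [Fintype V] (ℓ : ℕ) (hℓ : 1 ≤ ℓ)
    (G : SimpleGraph V) [DecidableRel G.Adj]
    (hiso : ∀ v : V, 0 < G.degree v) (hdeg : ∀ v : V, G.degree v ≤ ℓ)
    (D : Finset V) (hD : IsMinDomSet G D)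
    (hcard : Fintype.card V ≤ D.card + ℓ) :
    Fintype.card V ≤ ℓ ^ 2 + ℓ := by
  classical
  have hsum : Dᶜ.card + D.card = Fintype.card V := Finset.card_compl_add_card D
  -- `D` is covered by the neighbourhoods of the at most `ℓ` vertices outside `D`.
  have hsub : D ⊆ Dᶜ.biUnion fun u => G.neighborFinset u := by
    intro v hv
    obtain ⟨w, hw⟩ := (G.degree_pos_iff_exists_adj v).1 (hiso v)
    obtain ⟨u, hu, huv⟩ := hD.exists_adj_notMem hv hw
    simp only [Finset.mem_biUnion, Finset.mem_compl, SimpleGraph.mem_neighborFinset]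
    exact ⟨u, hu, huv⟩
  have hle : D.card ≤ Dᶜ.card * ℓ :=
    (Finset.card_le_card hsub).trans (Finset.card_biUnion_le_card_mul _ _ _ fun u _ => hdeg u)
  have hC : Dᶜ.card ≤ ℓ := by omega
  nlinarith [Nat.mul_le_mul_right ℓ hC]
end

section
/- Let G=(V,E) be a connected finite simple graph of order n with maximum degree Δ, and let D be a minimal dominating set of G such that l := n − |D| satisfies l ≥ 2. Then n ≤ (Δ + 1/2)·l, i.e., 2n ≤ (2Δ + 1)·l. -/
section Helpers

variable {V : Type*} {G : SimpleGraph V} {D : Finset V}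

/-- In a minimal dominating set every vertex `d` has a private closed neighbour: a vertex `w` of
`N[d]` lying in `N[d']` for no other `d' ∈ D`. -/
lemma exists_private (hD : IsMinDomSet G D) {d : V} (hd : d ∈ D) :
    ∃ w, (w = d ∨ G.Adj d w) ∧ ∀ d' ∈ D, d' ≠ d → w ≠ d' ∧ ¬ G.Adj d' w := by
  classical
  have h := hD.2 (D.erase d) (Finset.erase_ssubset hd)
  simp only [IsDomSet, not_forall] at h
  obtain ⟨w, hw⟩ := h
  push Not at hw
  have hw2 : ∀ d' ∈ D, d' ≠ d → w ≠ d' ∧ ¬ G.Adj d' w := fun d' hd' hne =>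
    ⟨fun e => hw.1 (e ▸ Finset.mem_erase.2 ⟨hne, hd'⟩), hw.2 d' (Finset.mem_erase.2 ⟨hne, hd'⟩)⟩
  refine ⟨w, ?_, hw2⟩
  by_contra! hcon
  rcases hD.1 w with h | ⟨u, hu, hadj⟩
  · exact (hw2 w h hcon.1).1 rfl
  · by_cases hud : u = d
    · exact hcon.2 (hud ▸ hadj)
    · exact (hw2 u hu hud).2 hadj

/-- A vertex of `D` with a neighbour in `D` cannot be its own private neighbour, so it has an
external one. -/
lemma exists_external_private (hD : IsMinDomSet G D) {d e : V} (hd : d ∈ D) (he : e ∈ D)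
    (hde : G.Adj d e) :
    ∃ w, w ∉ D ∧ G.Adj d w ∧ ∀ d' ∈ D, d' ≠ d → ¬ G.Adj d' w := by
  obtain ⟨w, hw, hp⟩ := exists_private hD hd
  have hdw : G.Adj d w := by
    rcases hw with rfl | h
    · exact absurd hde.symm (hp e he hde.ne').2
    · exact h
  exact ⟨w, fun hwD => (hp w hwD hdw.ne').1 rfl, hdw, fun d' h1 h2 => (hp d' h1 h2).2⟩

lemma exists_neighbor_compl (hD : IsMinDomSet G D) {d e : V} (hd : d ∈ D) (hde : G.Adj d e) :
    ∃ w, w ∉ D ∧ G.Adj d w := by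
  by_cases he : e ∈ D
  · obtain ⟨w, h1, h2, -⟩ := exists_external_private hD hd he hde
    exact ⟨w, h1, h2⟩
  · exact ⟨e, he, hde⟩

/-- A connected graph in which all neighbours of `u` are leaves is a star centred at `u`. -/
lemma eq_or_adj_of_leaves (hconn : G.Connected) {u : V}
    (h : ∀ d, G.Adj u d → ∀ x, G.Adj d x → x = u) (v : V) : v = u ∨ G.Adj u v := by
  obtain ⟨p⟩ := hconn.preconnected v u
  induction p with
  | nil => exact Or.inl rfl
  | cons hadj p ih =>
    rcases ih h with e | e
    · exact Or.inr (e ▸ hadj.symm)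
    · exact Or.inl (h _ e _ hadj.symm)

variable [Fintype V] [DecidableEq V] [DecidableRel G.Adj]

variable (G D) in
/-- The charge that `d` sends to each of its neighbours outside `D`: `2` if there is exactly one
such neighbour, and `1` otherwise. -/
def charge (d : V) : ℕ := if (Dᶜ.filter (G.Adj d)).card = 1 then 2 else 1

lemma charge_le_two (d : V) : charge G D d ≤ 2 := by
  unfold charge; split_ifs <;> omega

lemma two_le_charge_sent (hD : IsMinDomSet G D) {d e : V} (hd : d ∈ D) (hde : G.Adj d e) :
    2 ≤ ∑ _u ∈ Dᶜ.filter (G.Adj d), charge G D d := by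
  obtain ⟨w, hwD, hdw⟩ := exists_neighbor_compl hD hd hde
  have hpos : 0 < (Dᶜ.filter (G.Adj d)).card :=
    Finset.card_pos.2 ⟨w, by simp [hwD, hdw]⟩
  rw [Finset.sum_const, smul_eq_mul]
  unfold charge
  split_ifs <;> omega

lemma charge_received_lt (hconn : G.Connected) (hD : IsMinDomSet G D) (hl : 1 < (Dᶜ).card)
    {u : V} (hu : u ∉ D) :
    ∑ d ∈ D.filter (fun d => G.Adj d u), charge G D d < 2 * G.maxDegree := by
  set N := D.filter (fun d => G.Adj d u) with hN
  have hsum : ∑ d ∈ N, charge G D d ≤ N.card * 2 :=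
    Finset.sum_le_card_nsmul _ _ 2 fun d _ => charge_le_two d
  have hsub : N ⊆ G.neighborFinset u := fun d hd => by
    simpa [SimpleGraph.adj_comm] using (Finset.mem_filter.1 hd).2
  have hcard : N.card ≤ G.degree u := Finset.card_le_card hsub
  have hdeg := G.degree_le_maxDegree u
  by_cases h1 : ∃ x, G.Adj u x ∧ x ∉ D
  · obtain ⟨x, hux, hx⟩ := h1
    have : N.card < G.degree u := Finset.card_lt_card
      ((Finset.ssubset_iff_of_subset hsub).2 ⟨x, by simpa using hux, by simp [hN, hx]⟩)
    omega
  push Not at h1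
  by_cases h2 : ∃ d ∈ N, charge G D d < 2
  · have : ∑ d ∈ N, charge G D d < ∑ _d ∈ N, 2 :=
      Finset.sum_lt_sum (fun d _ => charge_le_two d) h2
    rw [Finset.sum_const, smul_eq_mul] at this
    omega
  push Not at h2
  -- From here on, `u` is the only neighbour outside `D` of each of its neighbours.
  have honly : ∀ d, G.Adj u d → ∀ x, G.Adj d x → x ∉ D → x = u := by
    intro d hud x hdx hx
    have hc := h2 d (by simp [hN, h1 d hud, hud.symm])
    have hone : (Dᶜ.filter (G.Adj d)).card = 1 := by
      unfold charge at hc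
      by_contra hne
      simp [hne] at hc
    exact Finset.card_le_one.1 hone.le x (by simp [hx, hdx]) u (by simp [hu, hud.symm])
  obtain ⟨d, hud, e, hde, heu⟩ : ∃ d, G.Adj u d ∧ ∃ e, G.Adj d e ∧ e ≠ u := by
    by_contra! hstar
    obtain ⟨v, hv, hvu⟩ := Finset.exists_mem_ne hl u
    rcases eq_or_adj_of_leaves hconn hstar v with h | h
    · exact hvu h
    · exact Finset.mem_compl.1 hv (h1 v h)
  have he : e ∈ D := by
    by_contra h
    exact heu (honly d hud e hde h)
  obtain ⟨w, hw, hdw, hpriv⟩ := exists_external_private hD (h1 d hud) he hde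
  obtain rfl := honly d hud w hdw hw
  have hN1 : N.card ≤ 1 := by
    have hall : ∀ x ∈ N, x = d := fun x hx => by
      by_contra hxd
      exact hpriv x (Finset.mem_filter.1 hx).1 hxd (Finset.mem_filter.1 hx).2
    exact Finset.card_le_one.2 fun x hx y hy => (hall x hx).trans (hall y hy).symm
  have hd2 : 1 < G.degree d :=
    Finset.one_lt_card.2 ⟨w, by simpa using hdw, e, by simpa using hde, heu.symm⟩
  have := G.degree_le_maxDegree d
  omega

end Helpers


theorem stmt11 {V : Type*} [Fintype V] (G : SimpleGraph V) [DecidableRel G.Adj]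
    (hconn : G.Connected) (D : Finset V) (hD : IsMinDomSet G D)
    (hl : 2 ≤ Fintype.card V - D.card) :
    2 * Fintype.card V ≤ (2 * G.maxDegree + 1) * (Fintype.card V - D.card) := by
  classical
  have hU : (Dᶜ).card = Fintype.card V - D.card := Finset.card_compl D
  have hDV : D.card ≤ Fintype.card V := Finset.card_le_univ D
  have hnt : Nontrivial V := Fintype.one_lt_card_iff_nontrivial.1 (by omega)
  have hlow : D.card * 2 ≤ ∑ d ∈ D, ∑ _u ∈ Dᶜ.filter (G.Adj d), charge G D d := by
    refine Finset.card_nsmul_le_sum D _ 2 fun d hd => ?_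
    obtain ⟨e, hde⟩ := hconn.preconnected.exists_adj_of_nontrivial d
    exact two_le_charge_sent hD hd hde
  have hswap : ∑ d ∈ D, ∑ _u ∈ Dᶜ.filter (G.Adj d), charge G D d
      = ∑ u ∈ Dᶜ, ∑ d ∈ D.filter (fun d => G.Adj d u), charge G D d :=
    Finset.sum_comm' fun d u => by simp only [Finset.mem_filter]; tauto
  have hup : ∑ u ∈ Dᶜ, (∑ d ∈ D.filter (fun d => G.Adj d u), charge G D d + 1)
      ≤ (Dᶜ).card * (2 * G.maxDegree) :=
    Finset.sum_le_card_nsmul _ _ (2 * G.maxDegree) fun u hu =>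
      Nat.succ_le_of_lt (charge_received_lt hconn hD (by omega) (Finset.mem_compl.1 hu))
  rw [Finset.sum_add_distrib, Finset.sum_const, smul_eq_mul, mul_one, ← hswap] at hup
  rw [← hU]
  have hn : Fintype.card V = D.card + (Dᶜ).card := by omega
  rw [hn]
  linarith
end
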